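/- arXiv:2506.04472 — 2 statements merged into one kernel-verified Lean document; each statement's English description precedes it below -/
import Mathlib

section
/- Let C be a category with pullbacks. Let p : B → A and k : C' → B be morphisms such that the pushforward p_*k : p_*C' → A of k along p exists, with counit ev : p^*p_*C' → C' over B, and let q : p^*p_*C' → p_*C' denote the projection of the pullback of p along p_*k. Let d : D → C' be a morphism such that the pushforward q_*(ev^*d) : q_*(ev^*D) → p_*C' of ev^*d : ev^*D → p^*p_*C' along q exists. Then the composite q_*(ev^*D) → p_*C' → A is a pushforward of the composite D → C' → B along p; that is, there are bijections Hom_{C/A}(x, q_*(ev^*D) → A) ≅ Hom_{C/B}(p^*x, k ∘ d) natural in x ∈ C/A. -/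
/-!
Write `Σ_P Q` for `q_*(ev^* D) ⟶ p_* C' ⟶ A`. A morphism `x ⟶ Σ_P Q` over `A` is a morphism
`t : x ⟶ P` together with a lift of `t` to `Q`, and a morphism from `p^* x` to `D ⟶ C' ⟶ B` is a
morphism `s : p^* x ⟶ k` together with a lift of `s` to `D`. The universal property of `P` matches
`t` with `s = p^* t ≫ ev`. By the pasting law, `p^* t` is a pullback of `t` along `q`, so the
universal property of `Q` matches lifts of `t` to `Q` with lifts of `p^* t` to `ev^* D`, which are
the lifts of `s` to `D`.
-/

open CategoryTheory CategoryTheory.Limits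

universe v u

namespace PaperHtpy

/-- `P`, together with the counit `ev`, is a pushforward of `k` along `p : B ⟶ A`:
it is a value at `k` of a right adjoint to the pullback functor `p^* : C/A ⥤ C/B`,
i.e. it represents `x ↦ Hom_{C/B}(p^* x, k)`. -/
structure IsPushforward {C : Type u} [Category.{v} C] [HasPullbacks C] {B A : C}
    (p : B ⟶ A) (k : Over B) (P : Over A) (ev : (Over.pullback p).obj P ⟶ k) : Prop where
  uniq : ∀ (x : Over A) (u : (Over.pullback p).obj x ⟶ k),
    ∃! v : x ⟶ P, (Over.pullback p).map v ≫ ev = u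

section Slice

variable {C : Type u} [Category.{v} C] {A : C} {x y : Over A}

/-- The projection `Σ_y Q ⟶ y` of the dependent sum of `Q : Over y.left` along `y.hom`. -/
def sigmaProj (Q : Over y.left) : Over.mk (Q.hom ≫ y.hom) ⟶ y :=
  Over.homMk Q.hom

/-- The pairing `x ⟶ Σ_y Q` of `t : x ⟶ y` with a lift `w` of `t` to `Q`. -/
def sigmaLift {Q : Over y.left} (t : x ⟶ y) (w : Over.mk t.left ⟶ Q) :
    x ⟶ Over.mk (Q.hom ≫ y.hom) :=
  Over.homMk w.left ((Over.w_assoc w y.hom).trans (Over.w t))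

@[simp]
lemma sigmaLift_sigmaProj {Q : Over y.left} (t : x ⟶ y) (w : Over.mk t.left ⟶ Q) :
    sigmaLift t w ≫ sigmaProj Q = t :=
  Over.OverMorphism.ext (Over.w w)

lemma exists_eq_sigmaLift {Q : Over y.left} (v : x ⟶ Over.mk (Q.hom ≫ y.hom)) :
    ∃ (t : x ⟶ y) (w : Over.mk t.left ⟶ Q), v = sigmaLift t w :=
  ⟨v ≫ sigmaProj Q, Over.homMk v.left, rfl⟩

lemma over_hom_eq_iff_of_isPullback {X Y Z : C} {E F : Over Z} {g : E.left ⟶ X} {a : Z ⟶ Y}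
    {b : X ⟶ Y} (sq : IsPullback E.hom g a b) {φ ψ : F ⟶ E} :
    φ = ψ ↔ φ.left ≫ g = ψ.left ≫ g :=
  ⟨fun h => h ▸ rfl, fun h => Over.OverMorphism.ext <|
    sq.hom_ext ((Over.w φ).trans (Over.w ψ).symm) h⟩

end Slice

section Pullback

variable {C : Type u} [Category.{v} C] [HasPullbacks C] {A B : C} (p : B ⟶ A)

lemma isPullback_pullback_obj (x : Over A) :
    IsPullback (P := ((Over.pullback p).obj x).left) (pullback.fst x.hom p)
      ((Over.pullback p).obj x).hom x.hom p :=
  IsPullback.of_hasPullback x.hom p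

lemma isPullback_pullback_map_left {x y : Over A} (t : x ⟶ y) :
    IsPullback (pullback.fst x.hom p) ((Over.pullback p).map t).left t.left
      (pullback.fst y.hom p) := by
  refine IsPullback.of_bot ?_ (pullback.lift_fst _ _ _).symm (isPullback_pullback_obj p y)
  rw [Over.w, Over.w]
  exact isPullback_pullback_obj p x

end Pullback

section Transpose

variable {C : Type u} [Category.{v} C] [HasPullbacks C] {A B : C} {p : B ⟶ A}
  {k : Over B} {P x y : Over A} {ev : (Over.pullback p).obj P ⟶ k}

/-- The adjoint transpose of `v : x ⟶ P` with respect to the counit `ev`, computed on an arbitrary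
commutative square over `x.hom` and `p` rather than on the chosen pullback `p^* x`. -/
noncomputable def transpose (ev : (Over.pullback p).obj P ⟶ k) {X : C} {f : X ⟶ x.left}
    {g : X ⟶ B} (sq : CommSq f g x.hom p) (v : x ⟶ P) : Over.mk g ⟶ k :=
  Over.homMk (U := Over.mk g) (V := (Over.pullback p).obj P)
    ((isPullback_pullback_obj p P).lift (f ≫ v.left) g
      (by rw [Category.assoc, Over.w, sq.w]))
    (IsPullback.lift_snd _ _ _ _) ≫ ev

lemma transpose_comp {X Y : C} {f : X ⟶ x.left} {g : X ⟶ B} {f' : Y ⟶ y.left} {g' : Y ⟶ B}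
    (sq : CommSq f g x.hom p) (sq' : CommSq f' g' y.hom p) (w : x ⟶ y) (v : y ⟶ P)
    (h : Over.mk g ⟶ Over.mk g') (hf : h.left ≫ f' = f ≫ w.left) :
    transpose ev sq (w ≫ v) = h ≫ transpose ev sq' v := by
  rw [transpose, transpose, ← Category.assoc]
  congr 1
  ext
  apply (isPullback_pullback_obj p P).hom_ext
  · simp only [Over.homMk_left, Over.comp_left, Category.assoc, IsPullback.lift_fst,
      reassoc_of% hf]
  · rw [Over.w, Over.w]

lemma transpose_pullback (v : x ⟶ P) :
    transpose ev (isPullback_pullback_obj p x).toCommSq v = (Over.pullback p).map v ≫ ev := by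
  rw [transpose]
  congr 1
  ext
  apply (isPullback_pullback_obj p P).hom_ext
  · exact (IsPullback.lift_fst _ _ _ _).trans (isPullback_pullback_map_left p v).w
  · rw [Over.w, Over.w]

lemma IsPushforward.existsUnique_transpose_eq (hP : IsPushforward p k P ev) {X : C}
    {f : X ⟶ x.left} {g : X ⟶ B} (sq : IsPullback f g x.hom p) (u : Over.mk g ⟶ k) :
    ∃! v : x ⟶ P, transpose ev sq.toCommSq v = u := by
  let e : Over.mk g ≅ (Over.pullback p).obj x :=
    Over.isoMk (sq.isoIsPullback _ _ (isPullback_pullback_obj p x))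
      (sq.isoIsPullback_hom_snd _ _ _)
  have transpose_eq (v : x ⟶ P) :
      transpose ev sq.toCommSq v = e.hom ≫ (Over.pullback p).map v ≫ ev := by
    rw [← transpose_pullback,
      ← transpose_comp sq.toCommSq _ (𝟙 x) v e.hom (by simp [e]), Category.id_comp]
  simpa only [transpose_eq, Iso.eq_inv_comp] using hP.uniq x (e.inv ≫ u)

/-- The bijection `Hom_{C/A}(x, P) ≃ Hom_{C/B}(p^* x, k)` that makes `P` the pushforward of `k`
along `p`. -/
noncomputable def IsPushforward.homEquiv (hP : IsPushforward p k P ev) (x : Over A) :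
    (x ⟶ P) ≃ ((Over.pullback p).obj x ⟶ k) :=
  Equiv.ofBijective (fun v => (Over.pullback p).map v ≫ ev)
    ((Function.bijective_iff_existsUnique _).2 (hP.uniq x))

lemma IsPushforward.homEquiv_comp (hP : IsPushforward p k P ev) (f : x ⟶ y) (v : y ⟶ P) :
    hP.homEquiv x (f ≫ v) = (Over.pullback p).map f ≫ hP.homEquiv y v := by
  simp only [homEquiv, Equiv.ofBijective_apply, Functor.map_comp, Category.assoc]

end Transpose

section Distributivity

variable {C : Type u} [Category.{v} C] [HasPullbacks C] {A B : C} {p : B ⟶ A}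
  {k : Over B} {d : Over k.left} {P : Over A} {ev : (Over.pullback p).obj P ⟶ k}
  {E : Over ((Over.pullback p).obj P).left} {g : E.left ⟶ d.left} {Q : Over P.left}
  {evQ : (Over.pullback (pullback.fst P.hom p)).obj Q ⟶ E}

/-- The counit `p^* Σ_P Q ⟶ Σ_k d` obtained from `ev` and `evQ`, where `E` plays the role of
`ev^* d`, with projection `g` to `d`. It is the composite `p^* Σ_P Q ≅ q^* Q ⟶ E ⟶ d`. -/
noncomputable def distribCounit (sq : CommSq E.hom g ev.left d.hom)
    (evQ : (Over.pullback (pullback.fst P.hom p)).obj Q ⟶ E) :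
    (Over.pullback p).obj (Over.mk (Q.hom ≫ P.hom)) ⟶ Over.mk (d.hom ≫ k.hom) :=
  sigmaLift ((Over.pullback p).map (sigmaProj Q) ≫ ev)
    (Over.homMk
      ((transpose evQ (isPullback_pullback_map_left p (sigmaProj Q)).toCommSq (𝟙 Q)).left ≫ g)
      (by rw [Category.assoc, ← sq.w, Over.w_assoc]; rfl))

@[simp]
lemma distribCounit_sigmaProj (sq : CommSq E.hom g ev.left d.hom) :
    distribCounit sq evQ ≫ sigmaProj d = (Over.pullback p).map (sigmaProj Q) ≫ ev :=
  sigmaLift_sigmaProj _ _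

lemma pullback_map_sigmaLift_distribCounit_left (sq : CommSq E.hom g ev.left d.hom)
    {x : Over A} (t : x ⟶ P) (w : Over.mk t.left ⟶ Q) :
    ((Over.pullback p).map (sigmaLift t w) ≫ distribCounit sq evQ).left =
      (transpose evQ (isPullback_pullback_map_left p t).toCommSq w).left ≫ g := by
  let h : Over.mk ((Over.pullback p).map t).left ⟶
      Over.mk ((Over.pullback p).map (sigmaProj Q)).left :=
    Over.homMk ((Over.pullback p).map (sigmaLift t w)).left (by
      change ((Over.pullback p).map _ ≫ (Over.pullback p).map _).left =
        ((Over.pullback p).map t).left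
      rw [← Functor.map_comp, sigmaLift_sigmaProj])
  rw [← Category.comp_id w, transpose_comp _
    (isPullback_pullback_map_left p (sigmaProj Q)).toCommSq w (𝟙 Q) h (pullback.lift_fst _ _ _)]
  simp [distribCounit, sigmaLift, h]

lemma pullback_map_sigmaLift_distribCounit_eq_iff (sq : IsPullback E.hom g ev.left d.hom)
    {x : Over A} {t : x ⟶ P} {w : Over.mk t.left ⟶ Q}
    {u : (Over.pullback p).obj x ⟶ Over.mk (d.hom ≫ k.hom)}
    (ht : (Over.pullback p).map t ≫ ev = u ≫ sigmaProj d) :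
    (Over.pullback p).map (sigmaLift t w) ≫ distribCounit sq.toCommSq evQ = u ↔
      transpose evQ (isPullback_pullback_map_left p t).toCommSq w =
        Over.homMk (sq.lift ((Over.pullback p).map t).left u.left (congrArg (·.left) ht))
          (sq.lift_fst _ _ _) := by
  rw [Over.OverMorphism.ext_iff, pullback_map_sigmaLift_distribCounit_left,
    over_hom_eq_iff_of_isPullback sq]
  exact (iff_of_eq (congrArg (_ = ·) (sq.lift_snd _ _ _))).symm

theorem IsPushforward.distrib (hP : IsPushforward p k P ev)
    (sq : IsPullback E.hom g ev.left d.hom)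
    (hQ : IsPushforward (pullback.fst P.hom p) E Q evQ) :
    IsPushforward p (Over.mk (d.hom ≫ k.hom)) (Over.mk (Q.hom ≫ P.hom))
      (distribCounit sq.toCommSq evQ) where
  uniq x u := by
    obtain ⟨t, ht, ht_unique⟩ := hP.uniq x (u ≫ sigmaProj d)
    obtain ⟨w, hw, hw_unique⟩ := hQ.existsUnique_transpose_eq (x := Over.mk t.left)
      (isPullback_pullback_map_left p t)
      (Over.homMk (sq.lift _ u.left (congrArg (·.left) ht)) (sq.lift_fst _ _ _))
    refine ⟨sigmaLift t w, (pullback_map_sigmaLift_distribCounit_eq_iff sq ht).2 hw, ?_⟩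
    intro v hv
    obtain ⟨t', w', rfl⟩ := exists_eq_sigmaLift v
    obtain rfl : t' = t := ht_unique t' <| by
      rw [← hv, Category.assoc, distribCounit_sigmaProj, ← Functor.map_comp_assoc,
        sigmaLift_sigmaProj]
    rw [hw_unique w' ((pullback_map_sigmaLift_distribCounit_eq_iff sq ht).1 hv)]

end Distributivity

/-- the distributive law, Lemma 2.3 of the paper.  Let `C` have
pullbacks, `p : B ⟶ A` and `k : C' ⟶ B` be morphisms such that the pushforward
`p_* k : p_* C' ⟶ A` exists, with counit `ev : p^* p_* C' ⟶ C'` over `B`, and let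
`q : p^* p_* C' ⟶ p_* C'` be the projection of the pullback of `p` along `p_* k`.
Let `d : D ⟶ C'` be a morphism such that the pushforward of `ev^* d` along `q`
exists, say `q_*(ev^* D)`.  Then the composite `q_*(ev^* D) ⟶ p_* C' ⟶ A` is a
pushforward of the composite `D ⟶ C' ⟶ B` along `p`: there are bijections
`Hom_{C/A}(x, q_*(ev^* D) → A) ≅ Hom_{C/B}(p^* x, k ∘ d)` natural in `x ∈ C/A`. -/
theorem pushforward_distributivity
    {C : Type u} [Category.{v} C] [HasPullbacks C]
    {B A C' D : C} (p : B ⟶ A) (k : C' ⟶ B) (d : D ⟶ C')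
    (P : Over A) (ev : (Over.pullback p).obj P ⟶ Over.mk k)
    (hP : IsPushforward p (Over.mk k) P ev)
    (Q : Over P.left) (evQ : (Over.pullback (pullback.fst P.hom p)).obj Q ⟶
      Over.mk (pullback.fst ev.left d))
    (hQ : IsPushforward (pullback.fst P.hom p) (Over.mk (pullback.fst ev.left d)) Q evQ) :
    ∃ e : ∀ x : Over A,
        (x ⟶ Over.mk (Q.hom ≫ P.hom)) ≃ ((Over.pullback p).obj x ⟶ Over.mk (d ≫ k)),
      ∀ {x y : Over A} (f : x ⟶ y) (v : y ⟶ Over.mk (Q.hom ≫ P.hom)),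
        e x (f ≫ v) = (Over.pullback p).map f ≫ e y v := by
  have hcomp := hP.distrib (d := Over.mk d) (IsPullback.of_hasPullback ev.left d) hQ
  exact ⟨hcomp.homEquiv, hcomp.homEquiv_comp⟩

end PaperHtpy
end

section
/- Let I be the walking span category, with objects 0, 01, 1 and non-identity morphisms l : 01 → 0 and r : 01 → 1. There exist functors A, B : I → Set such that the functions A(l) and B(l) are bijections, but the component [A,B](l) : [A,B]_{01} → [A,B]_0 of the exponential object [A,B] = B^A in the cartesian closed functor category Set^I is not a bijection. (Concretely, one may take A_0 = A_{01} = B_0 = B_{01} to be one-element sets and A_1, B_1 to be two-element sets, with A(r) and B(r) not surjective.) Hence, taking weak equivalences in Set to be the bijections, the full subcategory of homotopical diagrams in Set^I is not closed under exponentials. -/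
open CategoryTheory CategoryTheory.Limits

universe v u

namespace PaperHtpy

/-- `E` is an exponential object `[A,B] = B^A`: the data of bijections
`Hom(X × A, B) ≅ Hom(X, E)` natural in `X`. -/
structure IsExponential {D : Type u} [Category.{v} D] [HasBinaryProducts D]
    (A B E : D) where
  e : ∀ X : D, (X ⨯ A ⟶ B) ≃ (X ⟶ E)
  natural : ∀ {X Y : D} (f : X ⟶ Y) (g : Y ⨯ A ⟶ B),
    e X (prod.map f (𝟙 A) ≫ g) = f ≫ e Y g

/-- The evaluation map `E ⨯ A ⟶ B` of an exponential object. -/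
def IsExponential.eval {D : Type u} [Category.{v} D] [HasBinaryProducts D]
    {A B E : D} (h : IsExponential A B E) : E ⨯ A ⟶ B :=
  (h.e E).symm (𝟙 E)

open Opposite

universe w

/-! Write `y k` for the functor corepresented by `k`. By the Yoneda lemma and the exponential
adjunction, for `f : i ⟶ j` the map `[A,B](f)` is restriction of morphisms into `B` along
`y j × A ⟶ y i × A`. When `i` is initial, `y i × A ≅ A`, while `y j` is empty outside the objects
under `j`; so if `[A,B](f)` is injective, a morphism `A ⟶ B` is determined by its components at the
objects under `j`. Now let `f` be `l : 01 ⟶ 0`: the object `1` is not under `0`, so `[A,B](l)` is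
not injective as soon as two morphisms `A ⟶ B` differ only at `1`. -/

section Corepresentable

variable {J : Type w} [Category.{v} J]

theorem injective_map_iff_injective_uliftCoyoneda_map_comp (E : J ⥤ Type (max u v)) {i j : J}
    (f : i ⟶ j) :
    Function.Injective (E.map f) ↔ Function.Injective
      fun g : uliftCoyoneda.{u}.obj (op i) ⟶ E ↦ uliftCoyoneda.{u}.map f.op ≫ g := by
  have map_comp_yoneda : E.map f ∘ uliftCoyonedaEquiv.{u} = uliftCoyonedaEquiv.{u} ∘
      fun g : uliftCoyoneda.{u}.obj (op i) ⟶ E ↦ uliftCoyoneda.{u}.map f.op ≫ g :=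
    funext fun g ↦ uliftCoyonedaEquiv_naturality g f
  rw [← uliftCoyonedaEquiv.injective_comp, map_comp_yoneda,
    uliftCoyonedaEquiv.comp_injective]

theorem isSplitEpi_snd_uliftCoyoneda_of_isInitial {i : J} (hi : IsInitial i)
    (A : J ⥤ Type (max u v)) :
    IsSplitEpi (prod.snd : uliftCoyoneda.{u}.obj (op i) ⨯ A ⟶ A) :=
  let toCorepresentable : A ⟶ uliftCoyoneda.{u}.obj (op i) :=
    { app := fun k ↦ ↾fun _ ↦ ULift.up (hi.to k)
      naturality := fun _ _ _ ↦ by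
        ext
        exact ULift.ext _ _ (hi.hom_ext _ _) }
  IsSplitEpi.mk' ⟨prod.lift toCorepresentable (𝟙 A), prod.lift_snd _ _⟩

theorem uliftCoyoneda_prod_hom_ext {j : J} {A B : J ⥤ Type (max u v)}
    {g h : uliftCoyoneda.{u}.obj (op j) ⨯ A ⟶ B}
    (hgh : ∀ k, Nonempty (j ⟶ k) → g.app k = h.app k) : g = h := by
  ext k x
  have f : j ⟶ k := ((prod.fst : uliftCoyoneda.{u}.obj (op j) ⨯ A ⟶ _).app k x).down
  rw [hgh k ⟨f⟩]

end Corepresentable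

namespace IsExponential

theorem injective_comp_iff {D : Type u} [Category.{v} D] [HasBinaryProducts D] {A B E : D}
    (hE : IsExponential A B E) {X Y : D} (p : X ⟶ Y) :
    Function.Injective (fun g : Y ⟶ E ↦ p ≫ g) ↔
      Function.Injective fun g : Y ⨯ A ⟶ B ↦ prod.map p (𝟙 A) ≫ g := by
  have comp_curry : (fun g : Y ⟶ E ↦ p ≫ g) ∘ hE.e Y =
      hE.e X ∘ fun g : Y ⨯ A ⟶ B ↦ prod.map p (𝟙 A) ≫ g :=
    funext fun g ↦ (hE.natural p g).symm
  rw [← (hE.e Y).injective_comp, comp_curry, (hE.e X).comp_injective]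

theorem hom_ext_of_injective_map {J : Type w} [Category.{v} J] {A B E : J ⥤ Type (max u v)}
    (hE : IsExponential A B E) {i j : J} (hi : IsInitial i) {f : i ⟶ j}
    (hf : Function.Injective (E.map f)) {g h : A ⟶ B}
    (hgh : ∀ k, Nonempty (j ⟶ k) → g.app k = h.app k) : g = h := by
  have restrict_injective :=
    (hE.injective_comp_iff (uliftCoyoneda.{u}.map f.op)).mp
      ((injective_map_iff_injective_uliftCoyoneda_map_comp.{v, u} E f).mp hf)
  have snd_comp_eq : (prod.snd : uliftCoyoneda.{u}.obj (op i) ⨯ A ⟶ A) ≫ g = prod.snd ≫ h := by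
    refine restrict_injective (uliftCoyoneda_prod_hom_ext fun k hk ↦ ?_)
    simp only [NatTrans.comp_app, hgh k hk]
  have := isSplitEpi_snd_uliftCoyoneda_of_isInitial.{v, u} hi A
  exact (cancel_epi _).mp snd_comp_eq

end IsExponential

/-- The object `01` is initial in the walking span, so its corepresentable functor is terminal. -/
def walkingSpanZeroIsInitial : IsInitial WalkingSpan.zero :=
  IsInitial.ofUniqueHom (fun
    | .zero => 𝟙 _
    | .left => WalkingSpan.Hom.fst
    | .right => WalkingSpan.Hom.snd) fun _ _ ↦ Subsingleton.elim _ _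

/-- The diagram `1 ⟵ 1 ⟶ 2`, which serves as both `A` and `B`. -/
def pointInPair : WalkingSpan ⥤ Type u :=
  span (𝟙 PUnit) (↾fun _ ↦ ULift.up true)

/-- The endomorphism of `1 ⟵ 1 ⟶ 2` sending both elements of `2` to the image of the point. It
differs from the identity only at the object `1` of the walking span. -/
def collapsePair : pointInPair.{u} ⟶ pointInPair :=
  spanHomMk (𝟙 PUnit) (𝟙 PUnit) (↾fun _ ↦ ULift.up true)

theorem collapsePair_ne_id : collapsePair.{u} ≠ 𝟙 pointInPair := by
  intro collapse_eq
  have up_true_eq : ULift.up true = ULift.up false :=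
    congr($(collapse_eq).app WalkingSpan.right (ULift.up false))
  exact Bool.noConfusion (ULift.up_injective up_true_eq)

theorem collapsePair_app_of_left_hom (k : WalkingSpan) (hk : Nonempty (WalkingSpan.left ⟶ k)) :
    collapsePair.{u}.app k = (𝟙 pointInPair : pointInPair ⟶ pointInPair).app k := by
  obtain ⟨_ | _⟩ := hk
  rfl

theorem not_injective_map_fst_of_isExponential_pointInPair {E : WalkingSpan ⥤ Type u}
    (hE : IsExponential pointInPair pointInPair E) :
    ¬ Function.Injective (E.map WalkingSpan.Hom.fst) := fun hinj ↦
  collapsePair_ne_id <|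
    hE.hom_ext_of_injective_map walkingSpanZeroIsInitial hinj collapsePair_app_of_left_hom

/-- Example 3.7 of the paper.  Let `I` be the walking span
`0 ⟵ 01 ⟶ 1` (here `zero = 01`, `left = 0`, `right = 1`, and
`l = WalkingSpan.Hom.fst : 01 ⟶ 0`).  There are functors `A, B : I ⥤ Set` such that
`A(l)` and `B(l)` are bijections, but the component `[A,B](l)` of the exponential
object `[A,B] = B^A` in the cartesian closed category `Set^I` is not a bijection.
Hence (taking bijections as the weak equivalences of `Set`) the homotopical diagrams
in `Set^I` are not closed under exponentials. -/
theorem span_exponential_not_homotopical :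
    ∃ A B : WalkingSpan ⥤ Type u,
      Function.Bijective (A.map WalkingSpan.Hom.fst) ∧
      Function.Bijective (B.map WalkingSpan.Hom.fst) ∧
      ∀ (E : WalkingSpan ⥤ Type u), IsExponential A B E →
        ¬ Function.Bijective (E.map WalkingSpan.Hom.fst) := by
  refine ⟨pointInPair, pointInPair, Function.bijective_id, Function.bijective_id, ?_⟩
  intro E hE hbij
  exact not_injective_map_fst_of_isExponential_pointInPair hE hbij.injective

end PaperHtpy
end
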